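/- arXiv:2210.07671 — 2 statements merged into one kernel-verified Lean document; each statement's English description precedes it below -/
import Mathlib

section
/- Let A = {0,2,5,7} and n = 8, and let U_A be the set of z ∈ [0,2] having a unique representation z = x + y with (x,y) ∈ C_{A,8} × C_{A,8}, x ≤ y. Then dim_H(U_A) = log 3 / log 8. -/
open MeasureTheory Pointwise

def linCantor (n : ℕ) (A : Set ℕ) : Set ℝ :=
  {x | ∃ a : ℕ → ℕ, (∀ i, a i ∈ A) ∧ x = ∑' i : ℕ, (a i : ℝ) / n ^ (i + 1)}

/-! If a sum of two elements of the Cantor set `C` is unique, then so is the sum of their tails; and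
where their digits differ for the first time, the tails must agree, since they could be exchanged.
Hence, up to countably many rational affine maps, which do not increase the dimension, only the
sums `x + x` matter. As `C + C` is the whole interval `[0, 2]`, uniqueness of `x + x` forces every
digit `2` of `x` to be followed by `0` or `2`, and every digit `5` by `5` or `7`. Conversely, all
irrational numbers obeying these rules have unique doubles. The rules describe the infinite paths of
a graph on two vertices with three edges leaving each vertex, and paths which separate at the `n`-th
edge give numbers at distance comparable to `8⁻ⁿ`; so the dimension is `log 3 / log 8`. -/

open Set Filter Topology
open scoped ENNReal NNReal
open Real (ofDigits logb)

section HausdorffDimension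

theorem dimH_le_of_forall_exists_rat_affine {S T : Set ℝ}
    (h : ∀ z ∈ S, ∃ x ∈ T, ∃ p q : ℚ, p + q * x = z) : dimH S ≤ dimH T := by
  have hcover : S ⊆ ⋃ c : ℚ × ℚ, (fun x : ℝ ↦ c.1 + c.2 * x) '' T := by
    intro z hz
    obtain ⟨x, hx, p, q, rfl⟩ := h z hz
    exact mem_iUnion.2 ⟨(p, q), x, hx, rfl⟩
  have hlip (c : ℚ × ℚ) : LipschitzWith ‖(c.2 : ℝ)‖₊ fun x : ℝ ↦ c.1 + c.2 * x :=
    LipschitzWith.of_dist_le_mul fun x y ↦ by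
      rw [dist_add_left, coe_nnnorm, ← dist_smul₀ (c.2 : ℝ) x y, smul_eq_mul, smul_eq_mul]
  calc dimH S ≤ ⨆ c : ℚ × ℚ, dimH ((fun x : ℝ ↦ c.1 + c.2 * x) '' T) :=
        (dimH_mono hcover).trans_eq (dimH_iUnion _)
    _ ≤ dimH T := iSup_le fun c ↦ (hlip c).dimH_image_le T

theorem dimH_range_le_of_edist_le_rpow {T X Y : Type*} [EMetricSpace X] [EMetricSpace Y]
    {f : T → X} {g : T → Y} {K r : ℝ≥0} (hr : 0 < r)
    (h : ∀ s t, edist (g s) (g t) ≤ K * edist (f s) (f t) ^ (r : ℝ)) :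
    dimH (range g) ≤ dimH (range f) / r := by
  rcases isEmpty_or_nonempty Y with hY | hY
  · simp [eq_empty_of_isEmpty (range g)]
  have hfactor : g.FactorsThrough f := fun s t hst ↦ by
    simpa [hst, hr, hr.ne'] using h s t
  obtain ⟨e, rfl⟩ := (Function.factorsThrough_iff g).1 hfactor
  rw [range_comp]
  refine HolderOnWith.dimH_image_le (C := K) ?_ hr
  rintro _ ⟨s, rfl⟩ _ ⟨t, rfl⟩
  exact h s t

theorem pow_rpow_logb {b x : ℝ} (hb : 1 < b) (hx : 0 < x) (n : ℕ) :
    (b ^ n) ^ logb b x = x ^ n := by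
  rw [← Real.rpow_pow_comm (by positivity), Real.rpow_logb (by positivity) hb.ne' hx]

variable {X : Type*} [MetricSpace X] {m : ℕ} {b C c : ℝ} {Φ : (ℕ → Fin m) → X}

/-- The image under `Φ` of the cylinder of all sequences that start with the finite word `u`. -/
def cylinderImage (Φ : (ℕ → Fin m) → X) {n : ℕ} (u : Fin n → Fin m) : Set X :=
  Φ '' {t | ∀ i : Fin n, t i = u i}

theorem ediam_cylinderImage_le
    (h : ∀ n s t, (∀ i < n, s i = t i) → dist (Φ s) (Φ t) ≤ C / b ^ n) (n : ℕ)
    (u : Fin n → Fin m) :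
    Metric.ediam (cylinderImage Φ u) ≤ ENNReal.ofReal (C / b ^ n) := by
  refine Metric.ediam_le ?_
  rintro _ ⟨s, hs, rfl⟩ _ ⟨t, ht, rfl⟩
  rw [edist_dist]
  exact ENNReal.ofReal_le_ofReal <| h n s t fun i hi ↦ (hs ⟨i, hi⟩).trans (ht ⟨i, hi⟩).symm

theorem hausdorffMeasure_range_le [MeasurableSpace X] [BorelSpace X] [NeZero m] (hb : 1 < b)
    (h : ∀ n s t, (∀ i < n, s i = t i) → dist (Φ s) (Φ t) ≤ C / b ^ n) :
    μH[logb b m] (range Φ) ≤ ENNReal.ofReal (C ^ logb b m) := by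
  have hm : (1 : ℝ) ≤ m := mod_cast NeZero.one_le
  have hC : 0 ≤ C := by simpa using h 0 0 0
  have hr : 0 ≤ logb b m := Real.logb_nonneg hb hm
  have hmesh : Tendsto (fun n : ℕ ↦ ENNReal.ofReal (C / b ^ n)) atTop (𝓝 0) := by
    rw [← ENNReal.ofReal_zero]
    exact ENNReal.tendsto_ofReal <|
      tendsto_const_nhds.div_atTop (tendsto_pow_atTop_atTop_of_one_lt hb)
  have hcover (n : ℕ) : range Φ ⊆ ⋃ u : Fin n → Fin m, cylinderImage Φ u := by
    rintro _ ⟨t, rfl⟩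
    exact mem_iUnion.2 ⟨fun i ↦ t i, t, fun _ ↦ rfl, rfl⟩
  have hsum (n : ℕ) : ∑ u : Fin n → Fin m,
      Metric.ediam (cylinderImage Φ u) ^ logb b m ≤
        ENNReal.ofReal (C ^ logb b m) :=
    calc _ ≤ ∑ _u : Fin n → Fin m, ENNReal.ofReal (C / b ^ n) ^ logb b m := by
          gcongr with u
          exact ediam_cylinderImage_le h n u
      _ = ENNReal.ofReal (m ^ n * (C / b ^ n) ^ logb b m) := by
          rw [ENNReal.ofReal_rpow_of_nonneg (by positivity) hr, ENNReal.ofReal_mul (by positivity)]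
          simp
      _ = ENNReal.ofReal (C ^ logb b m) := by
          rw [Real.div_rpow hC (by positivity), pow_rpow_logb hb (by positivity),
            mul_div_cancel₀ _ (by positivity)]
  calc μH[logb b m] (range Φ)
      ≤ liminf (fun n ↦ ∑ u : Fin n → Fin m,
          Metric.ediam (cylinderImage Φ u) ^ logb b m) atTop :=
        Measure.hausdorffMeasure_le_liminf_sum _ _ _ hmesh _
          (.of_forall (ediam_cylinderImage_le h)) (.of_forall hcover)
    _ ≤ liminf (fun _ : ℕ ↦ ENNReal.ofReal (C ^ logb b m)) atTop :=
        liminf_le_liminf (.of_forall hsum)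
    _ = ENNReal.ofReal (C ^ logb b m) := liminf_const _

theorem dimH_range_le_logb [NeZero m] (hb : 1 < b)
    (h : ∀ n s t, (∀ i < n, s i = t i) → dist (Φ s) (Φ t) ≤ C / b ^ n) :
    dimH (range Φ) ≤ ENNReal.ofReal (logb b m) := by
  borelize X
  have hr : 0 ≤ logb b m := Real.logb_nonneg hb (mod_cast NeZero.one_le)
  refine dimH_le_of_hausdorffMeasure_ne_top (d := (logb b m).toNNReal) ?_
  rw [Real.coe_toNNReal _ hr]
  exact ((hausdorffMeasure_range_le hb h).trans_lt ENNReal.ofReal_lt_top).ne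

theorem abs_ofDigits_sub_le_rpow_logb (hm : 1 < m) (hb : 1 < b) (hc : 0 < c)
    (h : ∀ n s t, (∀ i < n, s i = t i) → s n ≠ t n → c / b ^ n ≤ dist (Φ s) (Φ t))
    (s t : ℕ → Fin m) :
    |ofDigits s - ofDigits t| ≤ (c⁻¹ * dist (Φ s) (Φ t)) ^ logb b m := by
  rcases eq_or_ne s t with rfl | hne
  · simp only [sub_self, abs_zero]
    positivity
  set n := PiNat.firstDiff s t
  have heq : ∀ i < n, s i = t i := fun i ↦ PiNat.apply_eq_of_lt_firstDiff
  have hsep : (b ^ n)⁻¹ ≤ c⁻¹ * dist (Φ s) (Φ t) := by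
    rw [le_inv_mul_iff₀ hc, ← div_eq_mul_inv]
    exact h n s t heq (PiNat.apply_firstDiff_ne hne)
  calc |ofDigits s - ofDigits t| ≤ ((m : ℝ) ^ n)⁻¹ := Real.abs_ofDigits_sub_ofDigits_le heq
    _ = (b ^ n)⁻¹ ^ logb b m := by
        rw [Real.inv_rpow (by positivity), pow_rpow_logb hb (by positivity)]
    _ ≤ (c⁻¹ * dist (Φ s) (Φ t)) ^ logb b m :=
        Real.rpow_le_rpow (by positivity) hsep (Real.logb_pos hb (mod_cast hm)).le

/- A Hölder map with exponent `logb b m` sends `Φ s` to the real number with base-`m` digits `s`,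
so it maps `range Φ` onto the unit interval, which has dimension `1`. -/
theorem logb_le_dimH_range (hm : 1 < m) (hb : 1 < b) (hc : 0 < c)
    (h : ∀ n s t, (∀ i < n, s i = t i) → s n ≠ t n → c / b ^ n ≤ dist (Φ s) (Φ t)) :
    ENNReal.ofReal (logb b m) ≤ dimH (range Φ) := by
  have hr : 0 < logb b m := Real.logb_pos hb (mod_cast hm)
  have hholder (s t : ℕ → Fin m) : edist (ofDigits s) (ofDigits t) ≤
      (c⁻¹ ^ logb b m).toNNReal * edist (Φ s) (Φ t) ^ ((logb b m).toNNReal : ℝ) := by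
    rw [edist_dist, edist_dist, Real.coe_toNNReal _ hr.le,
      ENNReal.ofReal_rpow_of_nonneg dist_nonneg hr.le, ← ENNReal.ofReal,
      ← ENNReal.ofReal_mul (by positivity), ← Real.mul_rpow (by positivity) dist_nonneg]
    exact ENNReal.ofReal_le_ofReal (abs_ofDigits_sub_le_rpow_logb hm hb hc h s t)
  have hunit : 1 ≤ dimH (range (ofDigits (b := m))) := by
    have hsurj : Icc (0 : ℝ) 1 ⊆ range (ofDigits (b := m)) := by
      simpa only [SurjOn, image_univ] using Real.ofDigits_SurjOn hm
    calc (1 : ℝ≥0∞) = dimH (Icc (0 : ℝ) 1) := by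
          rw [Real.dimH_of_nonempty_interior (by simp)]; simp
      _ ≤ _ := dimH_mono hsurj
  have hdiv : 1 ≤ dimH (range Φ) / ENNReal.ofReal (logb b m) :=
    hunit.trans (dimH_range_le_of_edist_le_rpow (Real.toNNReal_pos.2 hr) hholder)
  simpa using (ENNReal.le_div_iff_mul_le (.inl (by simpa using hr)) (.inl (by simp))).1 hdiv

end HausdorffDimension

section UniqueSums

/-- `x, y ∈ S`, and `{x, y}` is the only unordered pair of elements of `S` with sum `x + y`: the
uniqueness notion of the theorem, without the choice of an order on the summands. -/
def IsUniqueSum (S : Set ℝ) (x y : ℝ) : Prop :=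
  x ∈ S ∧ y ∈ S ∧ ∀ x' ∈ S, ∀ y' ∈ S, x' + y' = x + y → x' = x ∨ x' = y

theorem IsUniqueSum.symm {S : Set ℝ} {x y : ℝ} (h : IsUniqueSum S x y) : IsUniqueSum S y x :=
  ⟨h.2.1, h.1, fun x' hx' y' hy' hsum ↦ (h.2.2 x' hx' y' hy' (hsum.trans (add_comm y x))).symm⟩

theorem existsUnique_le_add_eq_iff {S : Set ℝ} {z : ℝ} :
    (∃! p : ℝ × ℝ, p.1 ∈ S ∧ p.2 ∈ S ∧ p.1 ≤ p.2 ∧ p.1 + p.2 = z) ↔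
      ∃ x y, IsUniqueSum S x y ∧ x + y = z := by
  constructor
  · rintro ⟨⟨x, y⟩, ⟨hx, hy, -, rfl⟩, huniq⟩
    refine ⟨x, y, ⟨hx, hy, fun x' hx' y' hy' hsum ↦ ?_⟩, rfl⟩
    rcases le_total x' y' with hle | hle
    · exact .inl (Prod.ext_iff.1 (huniq (x', y') ⟨hx', hy', hle, hsum⟩)).1
    · exact .inr (Prod.ext_iff.1 (huniq (y', x') ⟨hy', hx', hle, (add_comm _ _).trans hsum⟩)).2
  · rintro ⟨x, y, h, rfl⟩
    wlog hxy : x ≤ y generalizing x y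
    · simpa only [add_comm y x] using this y x h.symm (le_of_not_ge hxy)
    refine ⟨(x, y), ⟨h.1, h.2.1, hxy, rfl⟩, ?_⟩
    rintro ⟨x', y'⟩ ⟨hx', hy', hle, hsum⟩
    simp only at hle hsum
    rcases h.2.2 x' hx' y' hy' hsum with rfl | rfl <;> ext <;> simp only <;> linarith

end UniqueSums

section LinearCantorSets

theorem ofDigits_eq_head_add_tail {b : ℕ} (a : ℕ → Fin b) :
    ofDigits a = ((a 0 : ℕ) + ofDigits fun i ↦ a (i + 1)) / b := by
  rw [Real.ofDigits_eq_sum_add_ofDigits a 1]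
  simp only [Finset.sum_range_one, Real.ofDigitsTerm, zero_add, pow_one]
  ring

theorem ofDigits_mem_Icc_head {b : ℕ} (a : ℕ → Fin b) :
    ofDigits a ∈ Icc (((a 0 : ℕ) : ℝ) / b) (((a 0 : ℕ) + 1) / b) := by
  rw [ofDigits_eq_head_add_tail]
  constructor
  · gcongr
    exact le_add_of_nonneg_right (Real.ofDigits_nonneg _)
  · gcongr
    exact Real.ofDigits_le_one _

variable {b : ℕ} {A : Set ℕ}

theorem ofDigits_mem_linCantor {a : ℕ → Fin b} (ha : ∀ i, (a i : ℕ) ∈ A) :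
    ofDigits a ∈ linCantor b A :=
  ⟨fun i ↦ a i, ha, rfl⟩

theorem mem_linCantor_iff_ofDigits (hA : A ⊆ Iio b) {x : ℝ} :
    x ∈ linCantor b A ↔ ∃ a : ℕ → Fin b, (∀ i, (a i : ℕ) ∈ A) ∧ ofDigits a = x := by
  constructor
  · rintro ⟨a, ha, rfl⟩
    exact ⟨fun i ↦ ⟨a i, hA (ha i)⟩, ha, rfl⟩
  · rintro ⟨a, ha, rfl⟩
    exact ofDigits_mem_linCantor ha

theorem linCantor_subset_Icc (hA : A ⊆ Iio b) : linCantor b A ⊆ Icc 0 1 := by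
  intro x hx
  obtain ⟨a, -, rfl⟩ := (mem_linCantor_iff_ofDigits hA).1 hx
  exact ⟨Real.ofDigits_nonneg a, Real.ofDigits_le_one a⟩

theorem isCompact_linCantor (hA : A ⊆ Iio b) : IsCompact (linCantor b A) := by
  have himage : linCantor b A = ofDigits '' univ.pi fun _ : ℕ ↦ {d : Fin b | (d : ℕ) ∈ A} := by
    ext x
    simp only [mem_linCantor_iff_ofDigits hA, mem_image, mem_univ_pi, mem_ofPred_eq]
  rw [himage]
  exact (isCompact_univ_pi fun _ ↦ (toFinite _).isCompact).image Real.continuous_ofDigits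

theorem head_add_div_mem_linCantor (hA : A ⊆ Iio b) {d : ℕ} (hd : d ∈ A) {x : ℝ}
    (hx : x ∈ linCantor b A) : (d + x) / b ∈ linCantor b A := by
  obtain ⟨a, ha, rfl⟩ := (mem_linCantor_iff_ofDigits hA).1 hx
  refine (mem_linCantor_iff_ofDigits hA).2
    ⟨fun i ↦ i.casesOn ⟨d, hA hd⟩ a, fun i ↦ ?_, ofDigits_eq_head_add_tail _⟩
  cases i
  exacts [hd, ha _]

theorem digit_eq_of_add_eq_add (hA : A ⊆ Iio b) (hgap : ∀ d ∈ A, d + 1 ∉ A) {c d : ℕ} (hc : c ∈ A)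
    (hd : d ∈ A) {x y : ℝ} (hx : x ∈ linCantor b A) (hy : y ∈ linCantor b A)
    (h : c + x = d + y) : c = d := by
  have hx := linCantor_subset_Icc hA hx
  have hy := linCantor_subset_Icc hA hy
  have hcd : c ≤ d + 1 := mod_cast (by linarith [hx.1, hy.2] : (c : ℝ) ≤ d + 1)
  have hdc : d ≤ c + 1 := mod_cast (by linarith [hx.2, hy.1] : (d : ℝ) ≤ c + 1)
  have hcd' : c ≠ d + 1 := fun heq ↦ hgap d hd (heq ▸ hc)
  have hdc' : d ≠ c + 1 := fun heq ↦ hgap c hc (heq ▸ hd)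
  lia

namespace IsUniqueSum

variable {c d : ℕ} {x y : ℝ}

theorem eq_or_eq_of_add_eq_add (hA : A ⊆ Iio b)
    (h : IsUniqueSum (linCantor b A) ((c + x) / b) ((d + y) / b)) {c' d' : ℕ} (hc' : c' ∈ A)
    (hd' : d' ∈ A) {x' y' : ℝ} (hx' : x' ∈ linCantor b A) (hy' : y' ∈ linCantor b A)
    (hsum : (c' + x') + (d' + y') = (c + x) + (d + y)) : c' + x' = c + x ∨ c' + x' = d + y := by
  have hb : (b : ℝ) ≠ 0 := mod_cast (hA hc').ne_bot
  have := h.2.2 _ (head_add_div_mem_linCantor hA hc' hx') _ (head_add_div_mem_linCantor hA hd' hy')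
    (by rw [← add_div, ← add_div, hsum])
  simpa only [div_left_inj' hb] using this

theorem tail (hA : A ⊆ Iio b) (hgap : ∀ d ∈ A, d + 1 ∉ A) (hc : c ∈ A) (hd : d ∈ A)
    (hx : x ∈ linCantor b A) (hy : y ∈ linCantor b A)
    (h : IsUniqueSum (linCantor b A) ((c + x) / b) ((d + y) / b)) :
    IsUniqueSum (linCantor b A) x y := by
  refine ⟨hx, hy, fun x' hx' y' hy' hsum ↦ ?_⟩
  rcases h.eq_or_eq_of_add_eq_add hA hc hd hx' hy' (by linarith) with heq | heq
  · exact .inl (add_left_cancel heq)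
  · obtain rfl := digit_eq_of_add_eq_add hA hgap hc hd hx' hy heq
    exact .inr (add_left_cancel heq)

theorem tail_ofDigits (hA : A ⊆ Iio b) (hgap : ∀ d ∈ A, d + 1 ∉ A) {u v : ℕ → Fin b}
    (hu : ∀ i, (u i : ℕ) ∈ A) (hv : ∀ i, (v i : ℕ) ∈ A)
    (h : IsUniqueSum (linCantor b A) (ofDigits u) (ofDigits v)) :
    IsUniqueSum (linCantor b A) (ofDigits fun i ↦ u (i + 1)) (ofDigits fun i ↦ v (i + 1)) := by
  rw [ofDigits_eq_head_add_tail u, ofDigits_eq_head_add_tail v] at h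
  exact h.tail hA hgap (hu 0) (hv 0) (ofDigits_mem_linCantor fun i ↦ hu (i + 1))
    (ofDigits_mem_linCantor fun i ↦ hv (i + 1))

theorem iterate_tail_ofDigits (hA : A ⊆ Iio b) (hgap : ∀ d ∈ A, d + 1 ∉ A) {u v : ℕ → Fin b}
    (hu : ∀ i, (u i : ℕ) ∈ A) (hv : ∀ i, (v i : ℕ) ∈ A)
    (h : IsUniqueSum (linCantor b A) (ofDigits u) (ofDigits v)) (n : ℕ) :
    IsUniqueSum (linCantor b A) (ofDigits fun i ↦ u (i + n)) (ofDigits fun i ↦ v (i + n)) := by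
  induction n generalizing u v with
  | zero => exact h
  | succ _ ih => exact ih (fun i ↦ hu (i + 1)) (fun i ↦ hv (i + 1)) (h.tail_ofDigits hA hgap hu hv)

/- Otherwise the tails could be exchanged. -/
theorem tail_eq_tail_of_head_ne (hA : A ⊆ Iio b) (hgap : ∀ d ∈ A, d + 1 ∉ A) (hc : c ∈ A)
    (hd : d ∈ A) (hx : x ∈ linCantor b A) (hy : y ∈ linCantor b A)
    (h : IsUniqueSum (linCantor b A) ((c + x) / b) ((d + y) / b)) (hcd : c ≠ d) : y = x := by
  rcases h.eq_or_eq_of_add_eq_add hA hc hd hy hx (by ring) with heq | heq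
  · exact add_left_cancel heq
  · exact absurd (digit_eq_of_add_eq_add hA hgap hc hd hy hy heq) hcd

theorem head_eq_of_self (hA : A ⊆ Iio b) (hgap : ∀ d ∈ A, d + 1 ∉ A) (hd : d ∈ A)
    (hx : x ∈ linCantor b A) (h : IsUniqueSum (linCantor b A) ((d + x) / b) ((d + x) / b))
    {c c' : ℕ} (hc : c ∈ A) (hc' : c' ∈ A)
    (hsum : 2 * (d + x) - (c + c') ∈ linCantor b A + linCantor b A) : c = d := by
  obtain ⟨y, hy, y', hy', hyy'⟩ := hsum
  have heq : c + y = d + x :=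
    or_self_iff.1 (h.eq_or_eq_of_add_eq_add hA hc hc' hy hy' (by linarith))
  exact digit_eq_of_add_eq_add hA hgap hc hd hy hx heq

theorem exists_rat_affine_self_of_ne (hA : A ⊆ Iio b) (hgap : ∀ d ∈ A, d + 1 ∉ A) {n : ℕ}
    {u v : ℕ → Fin b} (hu : ∀ i, (u i : ℕ) ∈ A) (hv : ∀ i, (v i : ℕ) ∈ A)
    (h : IsUniqueSum (linCantor b A) (ofDigits u) (ofDigits v)) (hne : u n ≠ v n) :
    ∃ w, IsUniqueSum (linCantor b A) w w ∧ ∃ p q : ℚ, p + q * w = ofDigits u + ofDigits v := by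
  induction n generalizing u v with
  | zero =>
    have hut := ofDigits_mem_linCantor fun i ↦ hu (i + 1)
    have hvt := ofDigits_mem_linCantor fun i ↦ hv (i + 1)
    rw [ofDigits_eq_head_add_tail u, ofDigits_eq_head_add_tail v] at h ⊢
    have hself := h.tail hA hgap (hu 0) (hv 0) hut hvt
    have heq := h.tail_eq_tail_of_head_ne hA hgap (hu 0) (hv 0) hut hvt (Fin.val_ne_of_ne hne)
    rw [heq] at hself ⊢
    exact ⟨_, hself, (u 0 + v 0) / b, 2 / b, by push_cast; ring⟩
  | succ n ih =>
    obtain ⟨w, hw, p, q, hpq⟩ := ih (fun i ↦ hu (i + 1)) (fun i ↦ hv (i + 1))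
      (h.tail_ofDigits hA hgap hu hv) hne
    refine ⟨w, hw, (u 0 + v 0 + p) / b, q / b, ?_⟩
    rw [ofDigits_eq_head_add_tail u, ofDigits_eq_head_add_tail v, ← add_div, add_add_add_comm,
      ← hpq]
    push_cast
    ring

theorem exists_rat_affine_self (hA : A ⊆ Iio b) (hgap : ∀ d ∈ A, d + 1 ∉ A)
    (h : IsUniqueSum (linCantor b A) x y) :
    ∃ w, IsUniqueSum (linCantor b A) w w ∧ ∃ p q : ℚ, p + q * w = x + y := by
  obtain ⟨u, hu, rfl⟩ := (mem_linCantor_iff_ofDigits hA).1 h.1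
  obtain ⟨v, hv, rfl⟩ := (mem_linCantor_iff_ofDigits hA).1 h.2.1
  rcases eq_or_ne u v with rfl | hne
  · exact ⟨_, h, 0, 2, by push_cast; ring⟩
  · obtain ⟨n, hn⟩ := Function.ne_iff.1 hne
    exact h.exists_rat_affine_self_of_ne hA hgap hu hv hn

end IsUniqueSum

theorem dimH_setOf_isUniqueSum_add_eq (hA : A ⊆ Iio b) (hgap : ∀ d ∈ A, d + 1 ∉ A) :
    dimH {z : ℝ | ∃ x y, IsUniqueSum (linCantor b A) x y ∧ x + y = z} =
      dimH {x | IsUniqueSum (linCantor b A) x x} := by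
  apply le_antisymm <;> apply dimH_le_of_forall_exists_rat_affine
  · rintro _ ⟨x, y, h, rfl⟩
    exact h.exists_rat_affine_self hA hgap
  · intro x hx
    exact ⟨x + x, ⟨x, x, hx, rfl⟩, 0, 1 / 2, by push_cast; ring⟩

end LinearCantorSets

section ExpandingMaps

theorem subset_of_isClosed_of_subset_iUnion_image {α ι : Type*} [PseudoMetricSpace α]
    {f : ι → α → α} {r : ℝ≥0} (hr : r < 1) (hf : ∀ i, LipschitzWith r (f i)) {I K : Set α}
    (hK : IsClosed K) (hKne : K.Nonempty) (hKf : ∀ i, MapsTo (f i) K K)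
    (hI : Bornology.IsBounded I) (hIf : I ⊆ ⋃ i, f i '' I) : I ⊆ K := by
  obtain ⟨p₀, hp₀⟩ := hKne
  obtain ⟨R, hR⟩ := hI.subset_closedBall p₀
  have happrox (n : ℕ) : ∀ u ∈ I, ∃ p ∈ K, dist u p ≤ r ^ n * R := by
    induction n with
    | zero => exact fun u hu ↦ ⟨p₀, hp₀, by simpa using hR hu⟩
    | succ n ih =>
      intro u hu
      obtain ⟨i, v, hv, rfl⟩ := mem_iUnion.1 (hIf hu)
      obtain ⟨p, hp, hvp⟩ := ih v hv
      refine ⟨f i p, hKf i hp, ((hf i).dist_le_mul v p).trans ?_⟩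
      rw [pow_succ', mul_assoc]
      gcongr
  intro u hu
  have hlim : Tendsto (fun n : ℕ ↦ (r : ℝ) ^ n * R) atTop (𝓝 0) := by
    simpa using (tendsto_pow_atTop_nhds_zero_of_lt_one r.2 hr).mul_const R
  choose p hpK hup using fun n ↦ happrox n u hu
  have hp : Tendsto p atTop (𝓝 u) := tendsto_iff_dist_tendsto_zero.2 <|
    squeeze_zero (fun _ ↦ dist_nonneg) (fun n ↦ dist_comm u (p n) ▸ hup n) hlim
  exact hK.mem_of_tendsto hp (.of_forall hpK)

end ExpandingMaps

section Digits0257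

local notation "𝒟" => ({0, 2, 5, 7} : Set ℕ)

theorem digits_subset_Iio : 𝒟 ⊆ Iio 8 := by
  rintro d (rfl | rfl | rfl | rfl) <;> simp

theorem succ_notMem_digits : ∀ d ∈ 𝒟, d + 1 ∉ 𝒟 := by
  rintro d (rfl | rfl | rfl | rfl) <;> simp

/- The sums of two digits are `0, 2, 4, 5, 7, 9, 10, 12, 14`, with no gap exceeding `2`. -/
theorem exists_digits_sub_mem_Icc {v : ℝ} (hv : v ∈ Icc 0 16) :
    ∃ c ∈ 𝒟, ∃ d ∈ 𝒟, v - (c + d) ∈ Icc 0 2 := by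
  by_contra! h
  have h' (c d : ℕ) (hc : c ∈ 𝒟 := by simp) (hd : d ∈ 𝒟 := by simp) (hle : (c + d : ℝ) ≤ v) :
      c + d + 2 < v := by
    by_contra! hlt
    exact h c hc d hd ⟨by linarith, by linarith⟩
  have h00 := h' 0 0
  have h02 := h' 0 2
  have h22 := h' 2 2
  have h05 := h' 0 5
  have h07 := h' 0 7
  have h27 := h' 2 7
  have h55 := h' 5 5
  have h57 := h' 5 7
  have h77 := h' 7 7
  norm_num at *
  grind

theorem Icc_subset_linCantor_add_linCantor :
    Icc 0 2 ⊆ linCantor 8 𝒟 + linCantor 8 𝒟 := by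
  have hcompact := isCompact_linCantor digits_subset_Iio
  have hzero : (0 : ℝ) ∈ linCantor 8 𝒟 := ⟨fun _ ↦ 0, by simp, by simp⟩
  let f (e : 𝒟 × 𝒟) (u : ℝ) : ℝ := (e.1 + e.2 + u) / 8
  have hf (e : 𝒟 × 𝒟) : LipschitzWith (1 / 8) (f e) := LipschitzWith.of_dist_le_mul fun u v ↦ by
    simp only [f, Real.dist_eq, ← sub_div, add_sub_add_left_eq_sub, abs_div]
    norm_num
    linarith
  refine subset_of_isClosed_of_subset_iUnion_image (f := f) (r := 1 / 8)
    (by rw [div_lt_one] <;> norm_num) hf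
    (hcompact.add hcompact).isClosed ⟨0 + 0, add_mem_add hzero hzero⟩ ?_
    (Metric.isBounded_Icc 0 2) ?_
  · rintro ⟨⟨c, hc⟩, ⟨d, hd⟩⟩ _ ⟨x, hx, y, hy, rfl⟩
    refine ⟨_, head_add_div_mem_linCantor digits_subset_Iio hc hx, _,
      head_add_div_mem_linCantor digits_subset_Iio hd hy, ?_⟩
    simp only [f, Nat.cast_ofNat]
    ring
  · rintro u ⟨hu₀, hu₂⟩
    obtain ⟨c, hc, d, hd, hv⟩ :=
      exists_digits_sub_mem_Icc (v := 8 * u) ⟨by linarith, by linarith⟩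
    exact mem_iUnion.2 ⟨(⟨c, hc⟩, ⟨d, hd⟩), _, hv, by simp only [f]; ring⟩

/-- The digits labelling the edges of the two-vertex graph with adjacency matrix
`[[2, 1], [1, 2]]`. The vertex `false` stands for the leading digits `0, 2` and the vertex `true`
for `5, 7`; from each vertex, the edges `0, 2` are loops and the edge `1` leads to the other one. -/
def edgeDigit : Bool → Fin 3 → Fin 8
  | false => ![0, 0, 2]
  | true => ![7, 7, 5]

/-- The endpoint of the `j`-th edge that starts at the vertex `q`. -/
def edgeTarget (q : Bool) (j : Fin 3) : Bool := q ^^ (j = 1)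

/-- The sequence of digits along the infinite path that starts at a given vertex and follows the
edges listed by a sequence. -/
def pathDigits : Bool → (ℕ → Fin 3) → ℕ → Fin 8
  | q, t, 0 => edgeDigit q (t 0)
  | q, t, n + 1 => pathDigits (edgeTarget q (t 0)) (fun i ↦ t (i + 1)) n

/-- The point of the graph-directed self-similar set at vertex `q` that is coded by `t`. -/
noncomputable def pathPoint (q : Bool) (t : ℕ → Fin 3) : ℝ := ofDigits (pathDigits q t)

/-- An interval containing the graph-directed set at a vertex, read off from the first digits: the
ones at `false` are at most `2`, those at `true` at least `5`. -/
def vertexInterval : Bool → Set ℝ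
  | false => Icc 0 (3 / 8)
  | true => Icc (5 / 8) 1

theorem edgeDigit_mem (q : Bool) (j : Fin 3) : (edgeDigit q j : ℕ) ∈ 𝒟 := by
  cases q <;> fin_cases j <;> simp [edgeDigit]

theorem pathDigits_mem (q : Bool) (t : ℕ → Fin 3) (n : ℕ) : (pathDigits q t n : ℕ) ∈ 𝒟 := by
  induction n generalizing q t with
  | zero => exact edgeDigit_mem q (t 0)
  | succ _ ih => exact ih _ _

theorem pathPoint_mem_linCantor (q : Bool) (t : ℕ → Fin 3) : pathPoint q t ∈ linCantor 8 𝒟 :=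
  ofDigits_mem_linCantor (pathDigits_mem q t)

theorem pathPoint_eq (q : Bool) (t : ℕ → Fin 3) : pathPoint q t =
    ((edgeDigit q (t 0) : ℕ) + pathPoint (edgeTarget q (t 0)) fun i ↦ t (i + 1)) / 8 :=
  mod_cast ofDigits_eq_head_add_tail (pathDigits q t)

theorem pathPoint_mem_Icc (q : Bool) (t : ℕ → Fin 3) : pathPoint q t ∈ Icc 0 1 :=
  linCantor_subset_Icc digits_subset_Iio (pathPoint_mem_linCantor q t)

theorem pathPoint_mem_vertexInterval (q : Bool) (t : ℕ → Fin 3) :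
    pathPoint q t ∈ vertexInterval q := by
  obtain ⟨h₀, h₁⟩ := pathPoint_mem_Icc (edgeTarget q (t 0)) fun i ↦ t (i + 1)
  rw [pathPoint_eq]
  generalize t 0 = j at *
  cases q <;> fin_cases j <;> simp [vertexInterval, edgeDigit] at * <;> constructor <;> linarith

theorem dist_pathPoint_eq_dist_tail (q : Bool) {s t : ℕ → Fin 3} (h : s 0 = t 0) :
    dist (pathPoint q s) (pathPoint q t) =
      dist (pathPoint (edgeTarget q (t 0)) fun i ↦ s (i + 1))
        (pathPoint (edgeTarget q (t 0)) fun i ↦ t (i + 1)) / 8 := by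
  rw [pathPoint_eq q s, pathPoint_eq q t, h, Real.dist_eq, Real.dist_eq, ← sub_div, abs_div,
    add_sub_add_left_eq_sub, Nat.abs_ofNat]

theorem dist_pathPoint_le (q : Bool) (n : ℕ) (s t : ℕ → Fin 3) (h : ∀ i < n, s i = t i) :
    dist (pathPoint q s) (pathPoint q t) ≤ 1 / 8 ^ n := by
  induction n generalizing q s t with
  | zero => simpa using Real.dist_le_of_mem_Icc_01 (pathPoint_mem_Icc q s) (pathPoint_mem_Icc q t)
  | succ n ih =>
    rw [dist_pathPoint_eq_dist_tail q (h 0 n.succ_pos), pow_succ, ← div_div]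
    gcongr
    exact ih _ _ _ fun i hi ↦ h (i + 1) (Nat.succ_lt_succ hi)

theorem le_abs_sub_of_edge_ne (q : Bool) {j k : Fin 3} (hjk : j ≠ k) {x y : ℝ}
    (hx : x ∈ vertexInterval (edgeTarget q j)) (hy : y ∈ vertexInterval (edgeTarget q k)) :
    1 / 4 ≤ |((edgeDigit q j : ℕ) + x) - ((edgeDigit q k : ℕ) + y)| := by
  by_contra! hlt
  obtain ⟨hlt₀, hlt₁⟩ := abs_lt.1 hlt
  cases q <;> fin_cases j <;> fin_cases k <;>
    simp [vertexInterval, edgeDigit, edgeTarget] at hjk hx hy hlt₀ hlt₁ <;> linarith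

theorem le_dist_pathPoint (q : Bool) (n : ℕ) (s t : ℕ → Fin 3) (h : ∀ i < n, s i = t i)
    (hne : s n ≠ t n) : 1 / 32 / 8 ^ n ≤ dist (pathPoint q s) (pathPoint q t) := by
  induction n generalizing q s t with
  | zero =>
    have := le_abs_sub_of_edge_ne q hne (pathPoint_mem_vertexInterval _ fun i ↦ s (i + 1))
      (pathPoint_mem_vertexInterval _ fun i ↦ t (i + 1))
    rw [pathPoint_eq q s, pathPoint_eq q t, Real.dist_eq, ← sub_div, abs_div, Nat.abs_ofNat]
    linarith
  | succ n ih =>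
    rw [dist_pathPoint_eq_dist_tail q (h 0 n.succ_pos), pow_succ, ← div_div]
    gcongr
    exact ih _ _ _ (fun i hi ↦ h (i + 1) (Nat.succ_lt_succ hi)) hne

theorem digits_eq_edgeDigit {q : Bool} {j : Fin 3} {c d : ℕ} (hc : c ∈ 𝒟) (hd : d ∈ 𝒟) {x y w : ℝ}
    (hx : x ∈ Icc 0 1) (hy : y ∈ Icc 0 1) (hw : w ∈ vertexInterval (edgeTarget q j))
    (hw' : w ∈ Ioo 0 1) (h : (c + x) + (d + y) = 2 * ((edgeDigit q j : ℕ) + w)) :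
    c = edgeDigit q j ∧ d = edgeDigit q j := by
  obtain ⟨hx₀, hx₁⟩ := hx
  obtain ⟨hy₀, hy₁⟩ := hy
  obtain ⟨hw₀, hw₁⟩ := hw'
  rcases hc with rfl | rfl | rfl | rfl <;> rcases hd with rfl | rfl | rfl | rfl <;>
    cases q <;> fin_cases j <;> simp [vertexInterval, edgeDigit, edgeTarget] at hw h ⊢ <;> linarith

theorem irrational_pathPoint_tail {q : Bool} {t : ℕ → Fin 3} (h : Irrational (pathPoint q t)) :
    Irrational (pathPoint (edgeTarget q (t 0)) fun i ↦ t (i + 1)) := by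
  rintro ⟨p, hp⟩
  refine h ⟨((edgeDigit q (t 0) : ℕ) + p) / 8, ?_⟩
  rw [pathPoint_eq, ← hp]
  push_cast
  rfl

section

variable {q : Bool} {t : ℕ → Fin 3} {u v : ℕ → Fin 8}

theorem heads_eq_edgeDigit (hirr : Irrational (pathPoint q t)) (hu : (u 0 : ℕ) ∈ 𝒟)
    (hv : (v 0 : ℕ) ∈ 𝒟) (h : ofDigits u + ofDigits v = 2 * pathPoint q t) :
    u 0 = edgeDigit q (t 0) ∧ v 0 = edgeDigit q (t 0) := by
  have htail := irrational_pathPoint_tail hirr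
  have hIcc := pathPoint_mem_Icc (edgeTarget q (t 0)) fun i ↦ t (i + 1)
  have hIoo : pathPoint (edgeTarget q (t 0)) (fun i ↦ t (i + 1)) ∈ Ioo 0 1 :=
    ⟨hIcc.1.lt_of_ne' htail.ne_zero, hIcc.2.lt_of_ne htail.ne_one⟩
  rw [ofDigits_eq_head_add_tail u, ofDigits_eq_head_add_tail v, pathPoint_eq] at h
  push_cast at h
  have hheads := digits_eq_edgeDigit hu hv
    ⟨Real.ofDigits_nonneg fun i ↦ u (i + 1), Real.ofDigits_le_one _⟩
    ⟨Real.ofDigits_nonneg fun i ↦ v (i + 1), Real.ofDigits_le_one _⟩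
    (pathPoint_mem_vertexInterval _ _) hIoo (by linarith)
  exact hheads.imp Fin.ext Fin.ext

theorem digits_eq_pathDigits (hirr : Irrational (pathPoint q t)) (hu : ∀ i, (u i : ℕ) ∈ 𝒟)
    (hv : ∀ i, (v i : ℕ) ∈ 𝒟) (h : ofDigits u + ofDigits v = 2 * pathPoint q t) (n : ℕ) :
    u n = pathDigits q t n ∧ v n = pathDigits q t n := by
  have hheads := heads_eq_edgeDigit hirr (hu 0) (hv 0) h
  induction n generalizing q t u v with
  | zero => exact hheads
  | succ _ ih =>
    have htails : (ofDigits fun i ↦ u (i + 1)) + (ofDigits fun i ↦ v (i + 1)) =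
        2 * pathPoint (edgeTarget q (t 0)) fun i ↦ t (i + 1) := by
      rw [ofDigits_eq_head_add_tail u, ofDigits_eq_head_add_tail v, pathPoint_eq, hheads.1,
        hheads.2] at h
      push_cast at h
      linarith
    have hirr' := irrational_pathPoint_tail hirr
    exact ih hirr' (fun i ↦ hu (i + 1)) (fun i ↦ hv (i + 1)) htails
      (heads_eq_edgeDigit hirr' (hu 1) (hv 1) htails)

end

theorem isUniqueSum_pathPoint {q : Bool} {t : ℕ → Fin 3} (h : Irrational (pathPoint q t)) :
    IsUniqueSum (linCantor 8 𝒟) (pathPoint q t) (pathPoint q t) := by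
  refine ⟨pathPoint_mem_linCantor q t, pathPoint_mem_linCantor q t, fun x hx y hy hsum ↦ .inl ?_⟩
  obtain ⟨u, hu, rfl⟩ := (mem_linCantor_iff_ofDigits digits_subset_Iio).1 hx
  obtain ⟨v, hv, rfl⟩ := (mem_linCantor_iff_ofDigits digits_subset_Iio).1 hy
  have huv := digits_eq_pathDigits h hu hv (hsum.trans (two_mul _).symm)
  exact congrArg ofDigits (funext fun n ↦ (huv n).1)

theorem le_dimH_setOf_isUniqueSum_self :
    ENNReal.ofReal (logb 8 3) ≤ dimH {x | IsUniqueSum (linCantor 8 𝒟) x x} := by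
  have hcover : range (pathPoint false) ⊆
      {x | IsUniqueSum (linCantor 8 𝒟) x x} ∪ range ((↑) : ℚ → ℝ) := by
    rintro _ ⟨t, rfl⟩
    exact (em' _).imp_left isUniqueSum_pathPoint
  calc ENNReal.ofReal (logb 8 3) ≤ dimH (range (pathPoint false)) := by
        exact_mod_cast logb_le_dimH_range (m := 3) (b := 8) (c := 1 / 32) (by simp) (by norm_num)
          (by norm_num) (le_dist_pathPoint false)
    _ ≤ dimH ({x | IsUniqueSum (linCantor 8 𝒟) x x} ∪ range ((↑) : ℚ → ℝ)) := dimH_mono hcover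
    _ = dimH {x | IsUniqueSum (linCantor 8 𝒟) x x} := by
        rw [dimH_union, dimH_countable (countable_range _), max_eq_left zero_le]

/-- The vertex of the graph whose outgoing edges carry the digit `c`, if `c` is one of
`0, 2, 5, 7`. -/
def digitVertex (c : Fin 8) : Bool := 5 ≤ c

theorem exists_edge_of_digits {c d : Fin 8} (hc : (c : ℕ) ∈ 𝒟) (h₂ : c = 2 → d < 5)
    (h₅ : c = 5 → 5 ≤ d) :
    ∃ j, edgeDigit (digitVertex c) j = c ∧ edgeTarget (digitVertex c) j = digitVertex d := by
  simp only [mem_insert_iff, mem_singleton_iff] at hc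
  decide +revert

theorem pathDigits_eq {a : ℕ → Fin 8} {t : ℕ → Fin 3}
    (hdigit : ∀ n, edgeDigit (digitVertex (a n)) (t n) = a n)
    (htarget : ∀ n, edgeTarget (digitVertex (a n)) (t n) = digitVertex (a (n + 1))) (n : ℕ) :
    pathDigits (digitVertex (a 0)) t n = a n := by
  induction n generalizing a t with
  | zero => exact hdigit 0
  | succ _ ih =>
    rw [pathDigits, htarget 0]
    exact ih (fun n ↦ hdigit (n + 1)) fun n ↦ htarget (n + 1)

namespace IsUniqueSum

variable {a : ℕ → Fin 8}

theorem eq_digit_zero_of_mem_Icc (ha : ∀ i, (a i : ℕ) ∈ 𝒟)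
    (h : IsUniqueSum (linCantor 8 𝒟) (ofDigits a) (ofDigits a)) {c c' : ℕ} (hc : c ∈ 𝒟)
    (hc' : c' ∈ 𝒟)
    (hsum : 2 * ((a 0 : ℕ) + ofDigits fun i ↦ a (i + 1)) - (c + c') ∈ Icc (0 : ℝ) 2) :
    c = a 0 := by
  rw [ofDigits_eq_head_add_tail] at h
  exact h.head_eq_of_self digits_subset_Iio succ_notMem_digits (ha 0)
    (ofDigits_mem_linCantor fun i ↦ ha (i + 1)) hc hc' (Icc_subset_linCantor_add_linCantor hsum)

/- Otherwise twice the number is also a sum of numbers with leading digits `0` and `5`. -/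
theorem digit_one_lt_of_digit_zero_eq_two (ha : ∀ i, (a i : ℕ) ∈ 𝒟)
    (h : IsUniqueSum (linCantor 8 𝒟) (ofDigits a) (ofDigits a)) (h₀ : a 0 = 2) : a 1 < 5 := by
  by_contra! h₁
  have hx₀ := (ofDigits_mem_Icc_head fun i ↦ a (i + 1)).1
  have hx₁ := Real.ofDigits_le_one fun i ↦ a (i + 1)
  have ha₁ : (5 : ℝ) ≤ (a 1 : ℕ) := mod_cast h₁
  have hsum : 2 * ((a 0 : ℕ) + ofDigits fun i ↦ a (i + 1)) - ((0 : ℕ) + (5 : ℕ)) ∈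
      Icc (0 : ℝ) 2 := by
    simp only [h₀, zero_add, Nat.cast_ofNat, Fin.coe_ofNat_eq_mod] at hx₀ ⊢
    constructor <;> norm_num <;> linarith
  have hhead := h.eq_digit_zero_of_mem_Icc ha (by simp) (by simp) hsum
  simp [h₀] at hhead

/- Otherwise twice the number is also a sum of numbers with leading digits `2` and `7`. -/
theorem le_digit_one_of_digit_zero_eq_five (ha : ∀ i, (a i : ℕ) ∈ 𝒟)
    (h : IsUniqueSum (linCantor 8 𝒟) (ofDigits a) (ofDigits a)) (h₀ : a 0 = 5) : 5 ≤ a 1 := by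
  by_contra! h₁
  have hx₀ := Real.ofDigits_nonneg fun i ↦ a (i + 1)
  have hx₁ := (ofDigits_mem_Icc_head fun i ↦ a (i + 1)).2
  have ha₁ : (a 1 : ℕ) ≤ (2 : ℝ) := by
    have hmem := ha 1
    simp only [mem_insert_iff, mem_singleton_iff] at hmem
    exact_mod_cast (by lia : (a 1 : ℕ) ≤ 2)
  have hsum : 2 * ((a 0 : ℕ) + ofDigits fun i ↦ a (i + 1)) - ((2 : ℕ) + (7 : ℕ)) ∈
      Icc (0 : ℝ) 2 := by
    simp only [h₀, zero_add, Nat.cast_ofNat, Fin.coe_ofNat_eq_mod] at hx₁ ⊢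
    constructor <;> norm_num <;> linarith
  have hhead := h.eq_digit_zero_of_mem_Icc ha (by simp) (by simp) hsum
  simp [h₀] at hhead

end IsUniqueSum

theorem exists_pathPoint_eq {x : ℝ} (h : IsUniqueSum (linCantor 8 𝒟) x x) :
    ∃ q t, pathPoint q t = x := by
  obtain ⟨a, ha, rfl⟩ := (mem_linCantor_iff_ofDigits digits_subset_Iio).1 h.1
  have htail (n : ℕ) := h.iterate_tail_ofDigits digits_subset_Iio succ_notMem_digits ha ha n
  have hedge (n : ℕ) : ∃ j, edgeDigit (digitVertex (a n)) j = a n ∧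
      edgeTarget (digitVertex (a n)) j = digitVertex (a (n + 1)) := by
    rw [add_comm n 1]
    have := exists_edge_of_digits (ha (0 + n))
      ((htail n).digit_one_lt_of_digit_zero_eq_two fun i ↦ ha (i + n))
      ((htail n).le_digit_one_of_digit_zero_eq_five fun i ↦ ha (i + n))
    simpa only [zero_add] using this
  choose t hdigit htarget using hedge
  exact ⟨digitVertex (a 0), t, congrArg ofDigits (funext (pathDigits_eq hdigit htarget))⟩

theorem dimH_setOf_isUniqueSum_self_le :
    dimH {x | IsUniqueSum (linCantor 8 𝒟) x x} ≤ ENNReal.ofReal (logb 8 3) := by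
  have hcover : {x | IsUniqueSum (linCantor 8 𝒟) x x} ⊆ ⋃ q, range (pathPoint q) := by
    intro x hx
    obtain ⟨q, t, rfl⟩ := exists_pathPoint_eq hx
    exact mem_iUnion.2 ⟨q, t, rfl⟩
  calc dimH {x | IsUniqueSum (linCantor 8 𝒟) x x} ≤ ⨆ q, dimH (range (pathPoint q)) :=
        (dimH_mono hcover).trans_eq (dimH_iUnion _)
    _ ≤ ENNReal.ofReal (logb 8 3) := iSup_le fun q ↦ by
        exact_mod_cast dimH_range_le_logb (m := 3) (b := 8) (by norm_num) (dist_pathPoint_le q)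

end Digits0257

/-- For `A = {0,2,5,7}`, `n = 8`, the uniqueness set has Hausdorff dimension
`log 3 / log 8`. -/
theorem dimH_uniqueness_0257 :
    dimH {z : ℝ | z ∈ Set.Icc (0 : ℝ) 2 ∧
      ∃! p : ℝ × ℝ, p.1 ∈ linCantor 8 {0, 2, 5, 7} ∧ p.2 ∈ linCantor 8 {0, 2, 5, 7} ∧
        p.1 ≤ p.2 ∧ p.1 + p.2 = z} = ENNReal.ofReal (Real.log 3 / Real.log 8) := by
  have hIcc (z : ℝ) (h : ∃ x y, IsUniqueSum (linCantor 8 {0, 2, 5, 7}) x y ∧ x + y = z) :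
      z ∈ Icc 0 2 := by
    obtain ⟨x, y, ⟨hx, hy, -⟩, rfl⟩ := h
    obtain ⟨hx₀, hx₁⟩ := linCantor_subset_Icc digits_subset_Iio hx
    obtain ⟨hy₀, hy₁⟩ := linCantor_subset_Icc digits_subset_Iio hy
    constructor <;> linarith
  simp only [existsUnique_le_add_eq_iff, and_iff_right_of_imp (hIcc _)]
  rw [dimH_setOf_isUniqueSum_add_eq digits_subset_Iio succ_notMem_digits, Real.log_div_log]
  exact le_antisymm dimH_setOf_isUniqueSum_self_le le_dimH_setOf_isUniqueSum_self
end

section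
/- If A is n-good (0, n-1 ∈ A ⊆ {0,...,n-1} and C_{A,n} + C_{A,n} = [0,2]), then Lebesgue-almost every z ∈ [0,2] has continuum-many ordered representations z = x + y with x, y ∈ C_{A,n}. -/
open Pointwise

/-!
If two digit expansions of `x` and `y` differ infinitely often, then swapping their digits at
selected places produces `2 ^ ℵ₀` further representations of `x + y`; they are distinct as long as
all the new expansions of `x` agree at infinitely many places, because the two expansions of a
number with a non-unique expansion differ at all large places. If instead the expansions of `x` and
`y` eventually coincide, then `x - y = q` is rational and `x + y = 2 * x - q` lies in a countable
union of affine images of the Cantor set. That union is null when some digit is missing; when none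
is, the Cantor set is `[0, 1]` and an interval of values of `x` is available.
-/

open Cardinal Filter MeasureTheory Module Set

theorem mk_le_mk_antidiagonal {M : Type*} [AddCommGroup M] {r s t : Set M} {z : M}
    (h : ∀ x ∈ r, x ∈ s ∧ z - x ∈ t) : #r ≤ #(s.antidiagonal t z) :=
  mk_le_of_injective
    (f := fun x : r ↦ ⟨(x, z - x), (h x x.2).1, (h x x.2).2, add_sub_cancel _ _⟩)
    fun _ _ hxy ↦ Subtype.ext (congrArg (fun p ↦ p.1.1) hxy)

theorem continuum_le_mk_antidiagonal_Icc_Icc {a b c d z : ℝ} (hab : a < b) (hcd : c < d)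
    (hz : z ∈ Ioo (a + c) (b + d)) : 𝔠 ≤ #((Icc a b).antidiagonal (Icc c d) z) := by
  obtain ⟨hlower, hupper⟩ := hz
  have hlt : max a (z - d) < min b (z - c) :=
    max_lt (lt_min hab (by linarith)) (lt_min (by linarith) (by linarith))
  rw [← mk_Icc_real hlt]
  refine mk_le_mk_antidiagonal fun x hx ↦ ?_
  obtain ⟨⟨hax, hzd⟩, hxb, hzc⟩ : (a ≤ x ∧ z - d ≤ x) ∧ x ≤ b ∧ x ≤ z - c := by
    simpa only [mem_Icc, max_le_iff, le_min_iff] using hx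
  exact ⟨⟨hax, hxb⟩, by linarith, by linarith⟩

theorem exists_infinite_subset_infinite_diff {α : Type*} {s : Set α} (hs : s.Infinite) :
    ∃ t ⊆ s, t.Infinite ∧ (s \ t).Infinite := by
  obtain ⟨t, t', rfl, hdisj, hcard⟩ := hs.exists_union_disjoint_cardinal_eq_of_infinite
  have hiff : t.Infinite ↔ t'.Infinite := by
    rw [← infinite_coe_iff, ← infinite_coe_iff, infinite_iff, infinite_iff, hcard]
  have ht : t.Infinite := (infinite_union.mp hs).elim id hiff.mpr
  refine ⟨t, subset_union_left, ht, ?_⟩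
  rw [union_sdiff_cancel_left hdisj.le_bot]
  exact hiff.mp ht

section SelfSimilar

variable {E ι : Type*} [NormedAddCommGroup E] [NormedSpace ℝ E] [FiniteDimensional ℝ E]
  [MeasurableSpace E] [BorelSpace E] (μ : Measure E) [μ.IsAddHaarMeasure] [Countable ι]

theorem addHaar_eq_zero_of_subset_iUnion_vadd_smul {s : Set E} (hs : μ s ≠ ⊤) (v : ι → E)
    (c : ι → ℝ) (hc : ∑' i, ENNReal.ofReal |c i ^ finrank ℝ E| < 1)
    (hcover : s ⊆ ⋃ i, v i +ᵥ c i • s) : μ s = 0 := by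
  by_contra h0
  refine lt_irrefl (μ s) ?_
  calc
    μ s ≤ ∑' i, μ (v i +ᵥ c i • s) := (measure_mono hcover).trans (measure_iUnion_le _)
    _ = (∑' i, ENNReal.ofReal |c i ^ finrank ℝ E|) * μ s := by
      simp_rw [measure_vadd, Measure.addHaar_smul, ENNReal.tsum_mul_right]
    _ < 1 * μ s := ENNReal.mul_lt_mul_left h0 hs hc
    _ = μ s := one_mul _

end SelfSimilar

section Expansions

variable {b : ℕ} {u v : ℕ → Fin b}

theorem ofDigits_lt_one_add_of_apply_eq (hb : 1 < b) {k : ℕ} (hk : u k = v k) :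
    Real.ofDigits u < 1 + Real.ofDigits v := by
  rw [← Real.ofDigits_const_last_eq_one' hb, Real.ofDigits, Real.ofDigits, Real.ofDigits,
    ← Real.summable_ofDigitsTerm.tsum_add Real.summable_ofDigitsTerm]
  refine Summable.tsum_lt_tsum (i := k) (fun i ↦ ?_) ?_ Real.summable_ofDigitsTerm
    (Real.summable_ofDigitsTerm.add Real.summable_ofDigitsTerm)
  · have hdigit : (u i : ℝ) ≤ (b - 1 : ℕ) + (v i : ℕ) := by
      exact_mod_cast (Nat.le_sub_one_of_lt (u i).isLt).trans (Nat.le_add_right _ _)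
    simp only [Real.ofDigitsTerm, ← add_mul]
    gcongr
  · have hdigit : (u k : ℝ) < (b - 1 : ℕ) + (v k : ℕ) := by
      rw [hk]
      exact_mod_cast Nat.lt_add_of_pos_left (Nat.sub_pos_of_lt hb)
    simp only [Real.ofDigitsTerm, ← add_mul]
    gcongr

theorem ofDigits_lt_ofDigits_of_lt_of_apply_eq {m k : ℕ} (hlt : ∀ i < m, u i = v i)
    (hm : u m < v m) (hmk : m < k) (hk : u k = v k) : Real.ofDigits u < Real.ofDigits v := by
  have hb : 1 < b := by have := (v m).isLt; have : (u m : ℕ) < v m := hm; omega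
  have hprefix : ∑ i ∈ Finset.range m, Real.ofDigitsTerm u i =
      ∑ i ∈ Finset.range m, Real.ofDigitsTerm v i :=
    Finset.sum_congr rfl fun i hi ↦ by
      simp only [Real.ofDigitsTerm, hlt i (Finset.mem_range.mp hi)]
  have htail : Real.ofDigits (fun i ↦ u (i + (m + 1))) <
      1 + Real.ofDigits (fun i ↦ v (i + (m + 1))) :=
    ofDigits_lt_one_add_of_apply_eq hb (k := k - (m + 1)) (by
      simpa only [Nat.sub_add_cancel hmk] using hk)
  have hdigit : (u m : ℝ) + 1 ≤ (v m : ℕ) := by exact_mod_cast hm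
  have hpow : (0 : ℝ) < ((b : ℝ) ^ (m + 1))⁻¹ := by positivity
  rw [Real.ofDigits_eq_sum_add_ofDigits u (m + 1), Real.ofDigits_eq_sum_add_ofDigits v (m + 1),
    Finset.sum_range_succ, Finset.sum_range_succ, hprefix, add_assoc, add_assoc]
  simp only [Real.ofDigitsTerm]
  rw [mul_comm (u m : ℝ), mul_comm (v m : ℝ), ← mul_add, ← mul_add]
  exact (add_lt_add_iff_left _).mpr (mul_lt_mul_of_pos_left (by linarith) hpow)

theorem eq_of_ofDigits_eq_of_frequently_eq (h : Real.ofDigits u = Real.ofDigits v)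
    (hfreq : ∃ᶠ i in atTop, u i = v i) : u = v := by
  classical
  by_contra hne
  have hex : ∃ m, u m ≠ v m := Function.ne_iff.mp hne
  have hmin : ∀ i < Nat.find hex, u i = v i := fun i hi ↦ not_not.mp (Nat.find_min hex hi)
  obtain ⟨k, hmk, hk⟩ := frequently_atTop'.mp hfreq (Nat.find hex)
  rcases (Nat.find_spec hex).lt_or_gt with hm | hm
  · exact (ofDigits_lt_ofDigits_of_lt_of_apply_eq hmin hm hmk hk).ne h
  · exact (ofDigits_lt_ofDigits_of_lt_of_apply_eq (fun i hi ↦ (hmin i hi).symm) hm hmk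
      hk.symm).ne h.symm

theorem exists_ratCast_eq_ofDigits_sub (h : u =ᶠ[atTop] v) :
    ∃ q : ℚ, Real.ofDigits u - Real.ofDigits v = q := by
  obtain ⟨k, hk⟩ := eventually_atTop.mp h
  have htail : (fun i ↦ u (i + k)) = fun i ↦ v (i + k) := funext fun i ↦ hk _ (by omega)
  refine ⟨∑ i ∈ Finset.range k, ((u i : ℚ) - (v i : ℕ)) * ((b : ℚ) ^ (i + 1))⁻¹, ?_⟩
  rw [Real.ofDigits_eq_sum_add_ofDigits u k, Real.ofDigits_eq_sum_add_ofDigits v k, htail,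
    add_sub_add_right_eq_sub, ← Finset.sum_sub_distrib]
  push_cast
  simp only [Real.ofDigitsTerm, sub_mul]

theorem ofDigits_piecewise_add_ofDigits_piecewise (s : Set ℕ) [DecidablePred (· ∈ s)]
    (u v : ℕ → Fin b) :
    Real.ofDigits (s.piecewise v u) + Real.ofDigits (s.piecewise u v) =
      Real.ofDigits u + Real.ofDigits v := by
  simp only [Real.ofDigits]
  rw [← Real.summable_ofDigitsTerm.tsum_add Real.summable_ofDigitsTerm,
    ← Real.summable_ofDigitsTerm.tsum_add Real.summable_ofDigitsTerm]
  refine tsum_congr fun i ↦ ?_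
  by_cases hi : i ∈ s <;> simp [Real.ofDigitsTerm, hi, add_comm]

open Classical in
theorem injOn_ofDigits_piecewise {t : Set ℕ} (hne : ∀ i ∈ t, u i ≠ v i) (ht : tᶜ.Infinite) :
    InjOn (fun s : Set ℕ ↦ Real.ofDigits (s.piecewise v u)) (𝒫 t) := by
  intro s hs s' hs' h
  have hagree : ∃ᶠ i in atTop, s.piecewise v u i = s'.piecewise v u i :=
    (Nat.frequently_atTop_iff_infinite.mpr ht).mono fun i hi ↦ by
      rw [piecewise_eq_of_notMem _ _ _ (notMem_subset hs hi),
        piecewise_eq_of_notMem _ _ _ (notMem_subset hs' hi)]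
  have heq := congrFun (eq_of_ofDigits_eq_of_frequently_eq h hagree)
  ext i
  by_cases hi : i ∈ t
  · have := heq i
    have := hne i hi
    by_cases his : i ∈ s <;> by_cases his' : i ∈ s' <;> simp_all [eq_comm]
  · exact iff_of_false (notMem_subset hs hi) (notMem_subset hs' hi)

end Expansions

/-- The reals in `[0, 1]` having a base-`b` expansion all of whose digits lie in `D`. This is the
set `C_{A,n}` for `b = n` and `D = A`; typing the digits in `Fin b` makes it an image under
`Real.ofDigits`. -/
def digitCantor {b : ℕ} (D : Set (Fin b)) : Set ℝ :=
  Real.ofDigits '' {a | ∀ i, a i ∈ D}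

theorem linCantor_eq_digitCantor {n : ℕ} {A : Set ℕ} (hA : ∀ a ∈ A, a < n) :
    linCantor n A = digitCantor {d : Fin n | (d : ℕ) ∈ A} := by
  ext x
  constructor
  · rintro ⟨a, ha, rfl⟩
    exact ⟨fun i ↦ ⟨a i, hA _ (ha i)⟩, ha, rfl⟩
  · rintro ⟨a, ha, rfl⟩
    exact ⟨fun i ↦ a i, ha, rfl⟩

namespace digitCantor

variable {b : ℕ} {D : Set (Fin b)} {u v : ℕ → Fin b}

theorem subset_Icc : digitCantor D ⊆ Icc 0 1 := by
  rintro _ ⟨a, -, rfl⟩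
  exact ⟨Real.ofDigits_nonneg a, Real.ofDigits_le_one a⟩

theorem univ_eq_Icc (hb : 1 < b) : digitCantor (Set.univ : Set (Fin b)) = Icc 0 1 :=
  subset_Icc.antisymm fun _ hx ↦
    let ⟨a, _, ha⟩ := Real.ofDigits_SurjOn hb hx
    ⟨a, fun _ ↦ mem_univ _, ha⟩

theorem subset_iUnion_vadd_smul :
    digitCantor D ⊆ ⋃ d : D, ((d : Fin b) / b : ℝ) +ᵥ (b : ℝ)⁻¹ • digitCantor D := by
  rintro _ ⟨a, ha, rfl⟩
  refine mem_iUnion.mpr ⟨⟨a 0, ha 0⟩, ?_⟩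
  rw [Real.ofDigits_eq_sum_add_ofDigits a 1]
  simp only [Finset.sum_range_one, Real.ofDigitsTerm, zero_add, pow_one, ← div_eq_mul_inv]
  exact vadd_mem_vadd_set (smul_mem_smul_set ⟨_, fun i ↦ ha (i + 1), rfl⟩)

theorem volume_eq_zero (hD : D ≠ Set.univ) : volume (digitCantor D) = 0 := by
  have hcard : (D.ncard : ℝ) < b := by exact_mod_cast (by simpa using ncard_lt_card hD)
  have hb : (0 : ℝ) < b := (Nat.cast_nonneg _).trans_lt hcard
  have hfin : volume (digitCantor D) ≠ ⊤ := measure_ne_top_of_subset subset_Icc (by simp)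
  refine addHaar_eq_zero_of_subset_iUnion_vadd_smul volume hfin _ _ ?_ subset_iUnion_vadd_smul
  calc
    ∑' _ : D, ENNReal.ofReal |((b : ℝ)⁻¹) ^ finrank ℝ ℝ| = ENNReal.ofReal (D.ncard / b) := by
      rw [ENNReal.tsum_const, ENat.card_coe_set_eq, ← D.toFinite.cast_ncard_eq, finrank_self,
        pow_one, abs_of_pos (inv_pos.mpr hb), div_eq_mul_inv,
        ENNReal.ofReal_mul (Nat.cast_nonneg _), ENNReal.ofReal_natCast, ENat.toENNReal_coe]
    _ < 1 := ENNReal.ofReal_lt_one.mpr ((div_lt_one hb).mpr hcard)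

theorem ae_frequently_ne_of_add_eq (hnull : volume (digitCantor D) = 0) :
    ∀ᵐ z : ℝ, ∀ u v : ℕ → Fin b, (∀ i, u i ∈ D) → Real.ofDigits u + Real.ofDigits v = z →
      ∃ᶠ i in atTop, u i ≠ v i := by
  have hcover : volume (⋃ q : ℚ, (-q : ℝ) +ᵥ (2 : ℝ) • digitCantor D) = 0 := by
    simp_rw [measure_iUnion_null_iff, measure_vadd, Measure.addHaar_smul, hnull, mul_zero,
      implies_true]
  filter_upwards [measure_eq_zero_iff_ae_notMem.mp hcover] with z hz u v hu huv heq
  obtain ⟨q, hq⟩ := exists_ratCast_eq_ofDigits_sub (heq.mono fun _ ↦ not_not.mp)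
  have hz_eq : z = -q + 2 * Real.ofDigits u := by linarith
  refine hz (mem_iUnion.mpr ⟨q, ?_⟩)
  rw [hz_eq]
  exact vadd_mem_vadd_set (smul_mem_smul_set ⟨u, hu, rfl⟩)

theorem continuum_le_mk_antidiagonal (hu : ∀ i, u i ∈ D) (hv : ∀ i, v i ∈ D)
    (hne : ∃ᶠ i in atTop, u i ≠ v i) :
    𝔠 ≤ #((digitCantor D).antidiagonal (digitCantor D) (Real.ofDigits u + Real.ofDigits v)) := by
  classical
  obtain ⟨t, htne, ht, ht'⟩ :=
    exists_infinite_subset_infinite_diff (Nat.frequently_atTop_iff_infinite.mp hne)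
  have hcard : #((fun s : Set ℕ ↦ Real.ofDigits (s.piecewise v u)) '' 𝒫 t) = 𝔠 := by
    have := ht.to_subtype
    rw [mk_image_eq_of_injOn _ _ (injOn_ofDigits_piecewise htne (ht'.mono fun _ hi ↦ hi.2)),
      mk_powerset, mk_eq_aleph0, two_power_aleph0]
  rw [← hcard]
  refine mk_le_mk_antidiagonal ?_
  rintro _ ⟨s, -, rfl⟩
  have hmem {w w' : ℕ → Fin b} (hw : ∀ i, w i ∈ D) (hw' : ∀ i, w' i ∈ D) (i : ℕ) :
      s.piecewise w w' i ∈ D := by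
    by_cases hi : i ∈ s <;> simp [hi, hw, hw']
  refine ⟨⟨_, hmem hv hu, rfl⟩, s.piecewise u v, hmem hu hv, ?_⟩
  linarith [ofDigits_piecewise_add_ofDigits_piecewise s u v]

theorem ae_mk_antidiagonal_eq_continuum (hb : 1 < b) (D : Set (Fin b)) :
    ∀ᵐ z : ℝ, z ∈ digitCantor D + digitCantor D →
      #((digitCantor D).antidiagonal (digitCantor D) z) = 𝔠 := by
  have hle (z : ℝ) : #((digitCantor D).antidiagonal (digitCantor D) z) ≤ 𝔠 :=
    (mk_set_le _).trans (by simp [mk_real])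
  suffices ∀ᵐ z : ℝ, z ∈ digitCantor D + digitCantor D →
      𝔠 ≤ #((digitCantor D).antidiagonal (digitCantor D) z) from
    this.mono fun z hz hmem ↦ (hle z).antisymm (hz hmem)
  rcases eq_or_ne D Set.univ with rfl | hD
  · rw [univ_eq_Icc hb]
    filter_upwards [(Ioo_ae_eq_Icc (a := (0 + 0 : ℝ)) (b := 1 + 1)).mem_iff] with z hz hmem
    exact continuum_le_mk_antidiagonal_Icc_Icc one_pos one_pos
      (hz.mpr (Icc_add_Icc_subset 0 1 0 1 hmem))
  · filter_upwards [ae_frequently_ne_of_add_eq (volume_eq_zero hD)] with z hz hmem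
    obtain ⟨_, ⟨u, hu, rfl⟩, _, ⟨v, hv, rfl⟩, rfl⟩ := hmem
    exact continuum_le_mk_antidiagonal hu hv (hz u v hu rfl)

end digitCantor

theorem ae_continuum_representations_general (n : ℕ) (hn : 2 ≤ n) (A : Set ℕ)
    (hA : ∀ a ∈ A, a < n) :
    ∀ᵐ z : ℝ, z ∈ linCantor n A + linCantor n A →
      Cardinal.mk {p : ℝ × ℝ | p.1 ∈ linCantor n A ∧ p.2 ∈ linCantor n A ∧
        p.1 + p.2 = z} = Cardinal.continuum := by
  rw [linCantor_eq_digitCantor hA]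
  exact digitCantor.ae_mk_antidiagonal_eq_continuum hn _

/-- If `A` is `n`-good, then a.e. `z ∈ [0,2]` has continuum-many ordered
representations `z = x + y` with `x, y ∈ C_{A,n}`. -/
theorem ae_continuum_representations (n : ℕ) (hn : 2 ≤ n) (A : Set ℕ)
    (h0 : 0 ∈ A) (htop : n - 1 ∈ A) (hA : ∀ a ∈ A, a < n)
    (hgood : linCantor n A + linCantor n A = Set.Icc (0 : ℝ) 2) :
    ∀ᵐ z ∂(MeasureTheory.volume.restrict (Set.Icc (0 : ℝ) 2)),
      Cardinal.mk {p : ℝ × ℝ | p.1 ∈ linCantor n A ∧ p.2 ∈ linCantor n A ∧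
        p.1 + p.2 = z} = Cardinal.continuum := by
  rw [ae_restrict_iff' measurableSet_Icc, ← hgood]
  exact ae_continuum_representations_general n hn A hA
end
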